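/- For every n : ℕ, all a b : Fin n → Fin 4, and every complex matrix E indexed by (Fin n → Fin 2), the check maps associated with Pauli strings commute: T_{P_a}(T_{P_b}(E)) = T_{P_b}(T_{P_a}(E)), where T_Q(M) = (Q * M * Q + M)/2. -/

import Mathlib

/-!
Two single-qubit Pauli matrices commute or anticommute. Products of tensor-product matrices are
taken factor by factor, so the signs of the factors multiply and two Pauli strings `P` and `Q` also
satisfy `P * Q = s • (Q * P)` for a sign `s`. Passing from `P * Q * E * Q * P` to
`Q * P * E * P * Q` uses this relation twice, and the two signs cancel. Hence conjugation by `P`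
commutes with conjugation by `Q`, and so do the averages of these conjugations with the identity.
-/

open Matrix Complex Kronecker

noncomputable def pauli : Fin 4 → Matrix (Fin 2) (Fin 2) ℂ
  | 0 => !![1, 0; 0, 1]
  | 1 => !![0, 1; 1, 0]
  | 2 => !![0, -Complex.I; Complex.I, 0]
  | 3 => !![1, 0; 0, -1]

noncomputable def PauliString {n : ℕ} (a : Fin n → Fin 4) :
    Matrix (Fin n → Fin 2) (Fin n → Fin 2) ℂ :=
  Matrix.of fun f g => ∏ i, pauli (a i) (f i) (g i)

section SignCommute

/-- Commutation up to a sign: `P` and `Q` commute or anticommute. The sign is a unit of `ℤ`, so that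
the signs of the factors of a tensor product can be multiplied. -/
def SignCommute {A : Type*} [NonUnitalRing A] (P Q : A) : Prop :=
  ∃ s : ℤˣ, P * Q = s • (Q * P)

variable {A : Type*} [NonUnitalRing A] {P Q : A}

theorem signCommute_of_commute (h : Commute P Q) : SignCommute P Q :=
  ⟨1, by rw [one_smul, h.eq]⟩

theorem signCommute_of_mul_eq_neg_mul (h : P * Q = -(Q * P)) : SignCommute P Q :=
  ⟨-1, by rw [Units.neg_smul, one_smul, h]⟩

theorem SignCommute.conj_conj_comm (h : SignCommute P Q) (E : A) :
    P * (Q * E * Q) * P = Q * (P * E * P) * Q := by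
  obtain ⟨s, hPQ⟩ := h
  have hQP : Q * P = s • (P * Q) := by
    rw [hPQ, smul_smul, Int.units_mul_self, one_smul]
  calc P * (Q * E * Q) * P = P * Q * E * (Q * P) := by simp only [mul_assoc]
    _ = s • (Q * P) * E * s • (P * Q) := by rw [← hPQ, ← hQP]
    _ = Q * P * E * (P * Q) := by
      rw [smul_mul_assoc, smul_mul_assoc, mul_smul_comm, smul_smul, Int.units_mul_self, one_smul]
    _ = Q * (P * E * P) * Q := by simp only [mul_assoc]

end SignCommute

section CheckMap

variable (R : Type*) {A : Type*} [CommSemiring R] [Invertible (2 : R)] [Ring A] [Algebra R A]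

/-- The check map `T_Q` of an element `Q` of an `R`-algebra, the average of `E ↦ Q * E * Q` and the
identity. It is defined for every `Q`, not only for involutions. -/
def checkMap (Q : A) : Module.End R A :=
  ⅟(2 : R) • (LinearMap.mulLeftRight R (Q, Q) + 1)

theorem checkMap_apply (Q E : A) : checkMap R Q E = ⅟(2 : R) • (Q * E * Q + E) := by
  simp [checkMap]

theorem SignCommute.commute_checkMap {P Q : A} (h : SignCommute P Q) :
    Commute (checkMap R P) (checkMap R Q) := by
  have hconj : Commute (LinearMap.mulLeftRight R (P, P)) (LinearMap.mulLeftRight R (Q, Q)) :=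
    LinearMap.ext fun E => by simpa using h.conj_conj_comm E
  have hsum := (hconj.add_left (.one_left _)).add_right (.one_right _)
  exact (hsum.smul_left _).smul_right _

end CheckMap

section PiKronecker

variable {ι R : Type*} [Fintype ι]

/-- The tensor product of a finite family of matrices, the `ι`-indexed analogue of
`Matrix.kronecker`; its rows and columns are indexed by dependent functions. -/
def piKronecker {l m : ι → Type*} [CommMonoid R] (M : ∀ i, Matrix (l i) (m i) R) :
    Matrix (∀ i, l i) (∀ i, m i) R :=
  of fun f g => ∏ i, M i (f i) (g i)

theorem piKronecker_mul_piKronecker [DecidableEq ι] [CommSemiring R] {l m k : ι → Type*}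
    [∀ i, Fintype (m i)] (M : ∀ i, Matrix (l i) (m i) R) (N : ∀ i, Matrix (m i) (k i) R) :
    piKronecker M * piKronecker N = piKronecker fun i => M i * N i := by
  ext f g
  simp only [piKronecker, mul_apply, of_apply, ← Finset.prod_mul_distrib, Fintype.prod_sum]

theorem piKronecker_smul {S : Type*} [CommMonoid S] [CommMonoid R] [MulAction S R]
    [IsScalarTower S R R] [SMulCommClass S R R] {l m : ι → Type*} (s : ι → S)
    (M : ∀ i, Matrix (l i) (m i) R) :
    (piKronecker fun i => s i • M i) = (∏ i, s i) • piKronecker M := by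
  ext f g
  simp only [piKronecker, Matrix.smul_apply, of_apply, Finset.prod_smul]

theorem SignCommute.piKronecker [DecidableEq ι] [CommRing R] {m : ι → Type*}
    [∀ i, Fintype (m i)] {M N : ∀ i, Matrix (m i) (m i) R}
    (h : ∀ i, SignCommute (M i) (N i)) :
    SignCommute (piKronecker M) (piKronecker N) := by
  choose s hs using h
  refine ⟨∏ i, s i, ?_⟩
  simp only [piKronecker_mul_piKronecker, hs, piKronecker_smul]

end PiKronecker

theorem pauli_zero : pauli 0 = 1 :=
  one_fin_two.symm

theorem pauli_mul_eq_neg_mul {x y : Fin 4} (hx : x ≠ 0) (hy : y ≠ 0) (hxy : x ≠ y) :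
    pauli x * pauli y = -(pauli y * pauli x) := by
  fin_cases x <;> fin_cases y <;> simp_all [pauli]

theorem signCommute_pauli (x y : Fin 4) : SignCommute (pauli x) (pauli y) := by
  obtain rfl | hx := eq_or_ne x 0
  · exact signCommute_of_commute (pauli_zero ▸ Commute.one_left _)
  obtain rfl | hy := eq_or_ne y 0
  · exact signCommute_of_commute (pauli_zero ▸ Commute.one_right _)
  obtain rfl | hxy := eq_or_ne x y
  · exact signCommute_of_commute (Commute.refl _)
  · exact signCommute_of_mul_eq_neg_mul (pauli_mul_eq_neg_mul hx hy hxy)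

theorem pauliString_eq_piKronecker {n : ℕ} (a : Fin n → Fin 4) :
    PauliString a = piKronecker fun i => pauli (a i) :=
  rfl

theorem signCommute_pauliString {n : ℕ} (a b : Fin n → Fin 4) :
    SignCommute (PauliString a) (PauliString b) := by
  rw [pauliString_eq_piKronecker, pauliString_eq_piKronecker]
  exact SignCommute.piKronecker fun i => signCommute_pauli (a i) (b i)

theorem pauli_check_maps_commute (n : ℕ) (a b : Fin n → Fin 4)
    (E : Matrix (Fin n → Fin 2) (Fin n → Fin 2) ℂ) :
    (fun M => ((1 : ℂ) / 2) • (PauliString a * M * PauliString a + M))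
        ((fun M => ((1 : ℂ) / 2) • (PauliString b * M * PauliString b + M)) E) =
      (fun M => ((1 : ℂ) / 2) • (PauliString b * M * PauliString b + M))
        ((fun M => ((1 : ℂ) / 2) • (PauliString a * M * PauliString a + M)) E) := by
  have h := LinearMap.congr_fun ((signCommute_pauliString a b).commute_checkMap ℂ).eq E
  simpa only [Module.End.mul_apply, checkMap_apply, invOf_eq_inv, one_div] using h
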